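/- arXiv:1511.03841 — 3 statements merged into one kernel-verified Lean document; each statement's English description precedes it below -/
import Mathlib

section
/- Let X₀, X, X₁ be Banach spaces, let i₀ : X₀ → X be a compact linear operator and i₁ : X → X₁ an injective continuous linear operator. Let T > 0, 1 ≤ p < ∞ and 1 ≤ q ≤ ∞. Suppose (u_n) is a sequence of strongly measurable functions u_n : [0,T] → X₀ with sup_n ∫₀^T ‖u_n(t)‖_{X₀}^p dt < ∞, and suppose there exist w_n ∈ X₁ and Bochner-integrable functions v_n : [0,T] → X₁ with sup_n ‖v_n‖_{L^q([0,T];X₁)} < ∞ such that i₁(i₀(u_n(t))) = w_n + ∫₀^t v_n(s) ds for almost every t ∈ [0,T]. Then the sequence (i₀ ∘ u_n) has a subsequence converging strongly in L^p([0,T]; X). -/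
open MeasureTheory Filter
open scoped ENNReal NNReal

/-- Ehrling's lemma. -/
theorem al_ehrling {X₀ X X₁ : Type*}
    [NormedAddCommGroup X₀] [NormedSpace ℝ X₀]
    [NormedAddCommGroup X] [NormedSpace ℝ X]
    [NormedAddCommGroup X₁] [NormedSpace ℝ X₁]
    (i₀ : X₀ →L[ℝ] X) (hi₀ : IsCompactOperator i₀)
    (i₁ : X →L[ℝ] X₁) (hi₁ : Function.Injective i₁) (ε : ℝ) (hε : 0 < ε) :
    ∃ C : ℝ, 0 ≤ C ∧ ∀ x, ‖i₀ x‖ ≤ ε * ‖x‖ + C * ‖i₁ (i₀ x)‖ := by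
  obtain ⟨K, hK, hKs⟩ := hi₀.image_closedBall_subset_compact (f := (i₀ : X₀ →ₗ[ℝ] X)) 1
  have hK' : IsCompact (K ∩ {y | ε ≤ ‖y‖}) :=
    hK.inter_right (isClosed_le continuous_const continuous_norm)
  have key : ∃ δ : ℝ, 0 < δ ∧ ∀ y ∈ K ∩ {y | ε ≤ ‖y‖}, δ ≤ ‖i₁ y‖ := by
    rcases (K ∩ {y | ε ≤ ‖y‖}).eq_empty_or_nonempty with h | h
    · exact ⟨1, one_pos, by simp [h]⟩
    · obtain ⟨y, hy, hmin⟩ := hK'.exists_isMinOn h (f := fun y => ‖i₁ y‖)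
        (by fun_prop)
      refine ⟨‖i₁ y‖, ?_, fun z hz => hmin hz⟩
      rw [norm_pos_iff]
      intro h0
      have : y = 0 := hi₁ (by simpa using h0)
      have h2 : ε ≤ ‖y‖ := hy.2
      rw [this, norm_zero] at h2
      linarith
  obtain ⟨δ, hδ, hmin⟩ := key
  refine ⟨‖i₀‖ / δ, by positivity, fun x => ?_⟩
  by_cases hx : x = 0
  · simp [hx]
  have hxp : 0 < ‖x‖ := norm_pos_iff.2 hx
  by_cases hc : ε * ‖x‖ ≤ ‖i₀ x‖
  · have hmem : i₀ (‖x‖⁻¹ • x) ∈ K := by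
      apply hKs
      refine ⟨‖x‖⁻¹ • x, ?_, rfl⟩
      simp [norm_smul, hxp.ne']
    have h1 : δ ≤ ‖i₁ (i₀ (‖x‖⁻¹ • x))‖ := by
      refine hmin _ ⟨hmem, ?_⟩
      simp only [Set.mem_ofPred_eq, map_smul, norm_smul, norm_inv, norm_norm]
      rw [inv_mul_eq_div, le_div_iff₀ hxp]
      exact hc
    simp only [map_smul, norm_smul, norm_inv, norm_norm] at h1
    rw [inv_mul_eq_div, le_div_iff₀ hxp] at h1
    have h2 := i₀.le_opNorm x
    have h3 : ‖i₀‖ * ‖x‖ ≤ ‖i₀‖ / δ * ‖i₁ (i₀ x)‖ := by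
      rw [div_mul_eq_mul_div, le_div_iff₀ hδ]
      nlinarith [norm_nonneg i₀]
    nlinarith
  · push Not at hc
    have : 0 ≤ ‖i₀‖ / δ * ‖i₁ (i₀ x)‖ := by positivity
    linarith

section
variable {E : Type*} [NormedAddCommGroup E] [NormedSpace ℝ E] [CompleteSpace E]

theorem al_cont {V D : ℝ → E} {w : E} {T : ℝ} (hT : 0 ≤ T)
    (hV : IntervalIntegrable V volume 0 T)
    (hD : ∀ t ∈ Set.Icc 0 T, D t = w + ∫ s in (0:ℝ)..t, V s) :
    ContinuousOn D (Set.Icc 0 T) := by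
  have h1 : ContinuousOn (fun t => w + ∫ s in (0:ℝ)..t, V s) (Set.Icc 0 T) := by
    refine continuousOn_const.add ?_
    have := intervalIntegral.continuousOn_primitive_interval' hV (a := 0) (by simp)
    rwa [Set.uIcc_of_le hT] at this
  exact h1.congr hD

/-- pointwise cell estimate -/
theorem al_cell {V D : ℝ → E} {w : E} {T : ℝ}
    (hV : IntervalIntegrable V volume 0 T)
    (hD : ∀ t ∈ Set.Icc 0 T, D t = w + ∫ s in (0:ℝ)..t, V s)
    {a b t : ℝ} (ha : 0 ≤ a) (hat : a ≤ t) (htb : t ≤ b) (hb : b ≤ T) :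
    (b - a) * ‖D t‖ ≤ ‖∫ s in a..b, D s‖ + (b - a) * ∫ s in a..b, ‖V s‖ := by
  have hsub : ∀ x y, 0 ≤ x → x ≤ T → 0 ≤ y → y ≤ T → IntervalIntegrable V volume x y := by
    intro x y hx hx' hy hy'
    apply hV.mono_set
    rw [Set.uIcc_of_le (hx.trans hx')]
    exact Set.uIcc_subset_Icc ⟨hx, hx'⟩ ⟨hy, hy'⟩
  have hab : a ≤ b := hat.trans htb
  have hc := al_cont (ha.trans (hab.trans hb)) hV hD
  have hDi : IntervalIntegrable D volume a b := by
    apply ContinuousOn.intervalIntegrable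
    rw [Set.uIcc_of_le hab]
    exact hc.mono (Set.Icc_subset_Icc ha hb)
  have e1 : (b - a) • D t = (∫ s in a..b, D s) + ∫ s in a..b, (D t - D s) := by
    rw [intervalIntegral.integral_sub (by simp) hDi]
    simp
  have e2 : ‖∫ s in a..b, (D t - D s)‖ ≤ (∫ s in a..b, ‖V s‖) * |b - a| := by
    apply intervalIntegral.norm_integral_le_of_norm_le_const
    intro s hs
    rw [Set.uIoc_of_le hab] at hs
    have hs0 : 0 ≤ s := ha.trans hs.1.le
    have hsT : s ≤ T := hs.2.trans hb
    have ht0 : 0 ≤ t := ha.trans hat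
    have htT : t ≤ T := htb.trans hb
    rw [hD t ⟨ht0, htT⟩, hD s ⟨hs0, hsT⟩, add_sub_add_left_eq_sub,
      intervalIntegral.integral_interval_sub_left
        (hsub _ _ le_rfl (ht0.trans htT) ht0 htT) (hsub _ _ le_rfl (ht0.trans htT) hs0 hsT)]
    refine intervalIntegral.norm_integral_le_integral_norm_uIoc.trans ?_
    rw [intervalIntegral.integral_of_le hab]
    apply setIntegral_mono_set
    · exact ((hsub a b ha (hab.trans hb) (ha.trans hab) hb).1).norm
    · exact Eventually.of_forall fun _ => norm_nonneg _
    · apply LE.le.eventuallyLE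
      intro x hx
      rw [Set.mem_uIoc] at hx
      rcases hx with h | h
      · exact ⟨hs.1.trans h.1, h.2.trans htb⟩
      · exact ⟨hat.trans_lt h.1, h.2.trans hs.2⟩
  rw [abs_of_nonneg (by linarith)] at e2
  calc (b - a) * ‖D t‖ = ‖(b - a) • D t‖ := by
        rw [norm_smul, Real.norm_of_nonneg (by linarith)]
    _ ≤ _ := by
        rw [e1]; refine (norm_add_le _ _).trans ?_; linarith

/-- integrated estimate over a uniform partition -/
theorem al_part {V D : ℝ → E} {w : E} {T : ℝ} (hT : 0 < T)
    (hV : IntervalIntegrable V volume 0 T)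
    (hD : ∀ t ∈ Set.Icc 0 T, D t = w + ∫ s in (0:ℝ)..t, V s) (N : ℕ) (hN : 0 < N) :
    ∫ t in (0:ℝ)..T, ‖D t‖ ≤
      (∑ j ∈ Finset.range N, ‖∫ s in (j * (T / N))..((j + 1 : ℕ) * (T / N)), D s‖)
        + T / N * ∫ s in (0:ℝ)..T, ‖V s‖ := by
  have hN' : (0:ℝ) < N := by exact_mod_cast hN
  set h := T / N with hh
  have hpos : 0 < h := by positivity
  have hNh : N * h = T := by rw [hh]; field_simp
  have hc := al_cont hT.le hV hD
  have hle : ∀ j : ℕ, j ∈ Finset.range N → 0 ≤ j * h ∧ (j:ℝ) * h ≤ (j + 1 : ℕ) * h ∧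
      ((j + 1 : ℕ) : ℝ) * h ≤ T := by
    intro j hj
    have hj' : ((j + 1 : ℕ) : ℝ) ≤ N := by exact_mod_cast Finset.mem_range.1 hj
    refine ⟨by positivity, ?_, ?_⟩
    · push_cast; nlinarith
    · rw [← hNh]; gcongr
  have hVj : ∀ j < N, IntervalIntegrable (fun s => ‖V s‖) volume ((j:ℕ) * h) ((j + 1 : ℕ) * h) := by
    intro j hj
    obtain ⟨h1, h2, h3⟩ := hle j (Finset.mem_range.2 hj)
    apply hV.norm.mono_set
    rw [Set.uIcc_of_le hT.le, Set.uIcc_of_le h2]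
    exact Set.Icc_subset_Icc h1 h3
  have hDj : ∀ j < N, IntervalIntegrable (fun s => ‖D s‖) volume ((j:ℕ) * h) ((j + 1 : ℕ) * h) := by
    intro j hj
    obtain ⟨h1, h2, h3⟩ := hle j (Finset.mem_range.2 hj)
    apply ContinuousOn.intervalIntegrable
    rw [Set.uIcc_of_le h2]
    exact (hc.mono (Set.Icc_subset_Icc h1 h3)).norm
  have s1 := intervalIntegral.sum_integral_adjacent_intervals
    (a := fun j : ℕ => (j:ℝ) * h) hVj
  have s2 := intervalIntegral.sum_integral_adjacent_intervals
    (a := fun j : ℕ => (j:ℝ) * h) hDj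
  simp only [Nat.cast_zero, zero_mul, hNh] at s1 s2
  rw [← s1, ← s2, Finset.mul_sum, ← Finset.sum_add_distrib]
  apply Finset.sum_le_sum
  intro j hj
  obtain ⟨h1, h2, h3⟩ := hle j hj
  have hd : ((j + 1 : ℕ) : ℝ) * h - j * h = h := by push_cast; ring
  have hb : ∀ t ∈ Set.Icc ((j:ℝ) * h) ((j + 1 : ℕ) * h), ‖D t‖ ≤
      h⁻¹ * (‖∫ s in (j * h)..((j + 1 : ℕ) * h), D s‖
        + h * ∫ s in (j * h)..((j + 1 : ℕ) * h), ‖V s‖) := by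
    intro t ht
    have := al_cell hV hD h1 ht.1 ht.2 h3
    rw [hd] at this
    rwa [inv_mul_eq_div, le_div_iff₀ hpos, mul_comm]
  have := intervalIntegral.integral_mono_on h2 (hDj j (Finset.mem_range.1 hj)) (by simp) hb
  rw [intervalIntegral.integral_const, hd, smul_eq_mul, mul_inv_cancel_left₀ hpos.ne'] at this
  exact this

end

theorem al_L1 {E : Type*} [NormedAddCommGroup E] {T : ℝ}
    (q : ℝ≥0∞) (hq1 : 1 ≤ q) (f : ℕ → ℝ → E)
    (hf : ∀ n, AEStronglyMeasurable (f n) (volume.restrict (Set.Icc 0 T)))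
    (C : ℝ≥0∞) (hC : C < ⊤)
    (hb : ∀ n, eLpNorm (f n) q (volume.restrict (Set.Icc 0 T)) ≤ C) :
    ∃ C₁ : ℝ, 0 ≤ C₁ ∧ ∀ n, Integrable (f n) (volume.restrict (Set.Icc 0 T)) ∧
      ∫ t in Set.Icc 0 T, ‖f n t‖ ≤ C₁ := by
  have hm : ∀ n, MemLp (f n) q (volume.restrict (Set.Icc 0 T)) :=
    fun n => ⟨hf n, (hb n).trans_lt hC⟩
  have hi : ∀ n, Integrable (f n) (volume.restrict (Set.Icc 0 T)) :=
    fun n => (hm n).integrable hq1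
  set A : ℝ≥0∞ := C * (volume.restrict (Set.Icc 0 T)) Set.univ ^
    (1 / (1:ℝ≥0∞).toReal - 1 / q.toReal) with hA
  have hAtop : A ≠ ⊤ := by
    refine ENNReal.mul_ne_top hC.ne (ENNReal.rpow_ne_top_of_nonneg ?_ (measure_ne_top _ _))
    simp only [ENNReal.toReal_one, div_one, sub_nonneg, one_div]
    by_cases hq : q = ⊤
    · simp [hq]
    · apply inv_le_one_of_one_le₀
      have := ENNReal.toReal_mono hq hq1
      simpa using this
  refine ⟨A.toReal, ENNReal.toReal_nonneg, fun n => ⟨hi n, ?_⟩⟩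
  have h1 := eLpNorm_le_eLpNorm_mul_rpow_measure_univ hq1 (hf n)
  have h2 : eLpNorm (f n) 1 (volume.restrict (Set.Icc 0 T)) ≤ A :=
    h1.trans (mul_le_mul_left (hb n) _)
  rw [eLpNorm_one_eq_lintegral_enorm, ← ofReal_integral_norm_eq_lintegral_enorm (hi n)] at h2
  exact (ENNReal.ofReal_le_iff_le_toReal hAtop).1 h2

theorem al_interp {E α : Type*} [NormedAddCommGroup E] {m : MeasurableSpace α} (μ : Measure α)
    (p : ℝ≥0∞) (hp1 : 1 ≤ p) (hptop : p < ⊤) (f : α → E) (hf : Integrable f μ)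
    (M δ : ℝ) (hM : ∀ᵐ t ∂μ, ‖f t‖ ≤ M) (hδ : ∫ t, ‖f t‖ ∂μ ≤ δ) :
    eLpNorm f p μ ≤ (ENNReal.ofReal M ^ (p.toReal - 1) * ENNReal.ofReal δ) ^ (1 / p.toReal) := by
  have hp : 1 ≤ p.toReal := by simpa using ENNReal.toReal_mono hptop.ne hp1
  rw [eLpNorm_eq_lintegral_rpow_enorm_toReal (by positivity) hptop.ne]
  gcongr
  calc ∫⁻ x, ‖f x‖ₑ ^ p.toReal ∂μ
      ≤ ∫⁻ x, ENNReal.ofReal M ^ (p.toReal - 1) * ‖f x‖ₑ ∂μ := by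
        apply lintegral_mono_ae
        filter_upwards [hM] with x hx
        have e : ‖f x‖ₑ ^ p.toReal = ‖f x‖ₑ ^ (p.toReal - 1) * ‖f x‖ₑ := by
          conv_rhs => rw [← ENNReal.rpow_one ‖f x‖ₑ, ← ENNReal.rpow_mul, one_mul,
            ← ENNReal.rpow_add_of_nonneg _ _ (by linarith) zero_le_one]
          simp
        rw [e]
        gcongr
        rw [← ofReal_norm]
        exact ENNReal.ofReal_le_ofReal hx
    _ = ENNReal.ofReal M ^ (p.toReal - 1) * ∫⁻ x, ‖f x‖ₑ ∂μ := by
        rw [lintegral_const_mul'' _ hf.1.enorm]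
    _ ≤ _ := by
        rw [← ofReal_integral_norm_eq_lintegral_enorm hf]
        gcongr

theorem al_cauchy {E : Type*} [NormedAddCommGroup E] [NormedSpace ℝ E] [CompleteSpace E]
    {T : ℝ} (hT : 0 < T) (p : ℝ≥0∞) (hp1 : 1 ≤ p) (hptop : p < ⊤)
    (w : ℕ → E) (v G : ℕ → ℝ → E)
    (hv : ∀ n, IntervalIntegrable (v n) volume 0 T) (C : ℝ) (hC0 : 0 ≤ C)
    (hC : ∀ n, ∫ s in (0:ℝ)..T, ‖v n s‖ ≤ C)
    (hG : ∀ n, ∀ t ∈ Set.Icc 0 T, G n t = w n + ∫ s in (0:ℝ)..t, v n s)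
    (hcau : ∀ N j : ℕ, j < N → CauchySeq fun n => ∫ s in (j * (T / N))..((j + 1 : ℕ) * (T / N)), G n s)
    (η : ℝ≥0∞) (hη : 0 < η) :
    ∃ k, ∀ m ≥ k, ∀ n ≥ k,
      eLpNorm (fun t => G m t - G n t) p (volume.restrict (Set.Icc 0 T)) ≤ η := by
  have hp : 1 ≤ p.toReal := by simpa using ENNReal.toReal_mono hptop.ne hp1
  set M : ℝ := T⁻¹ * (1 + T * (2 * C)) with hMdef
  obtain ⟨δ, hδ, hδη⟩ : ∃ δ : ℝ, 0 < δ ∧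
      (ENNReal.ofReal M ^ (p.toReal - 1) * ENNReal.ofReal δ) ^ (1 / p.toReal) ≤ η := by
    have ht : Tendsto (fun δ : ℝ =>
        (ENNReal.ofReal M ^ (p.toReal - 1) * ENNReal.ofReal δ) ^ (1 / p.toReal))
        (nhds 0) (nhds ((ENNReal.ofReal M ^ (p.toReal - 1) * ENNReal.ofReal 0)
          ^ (1 / p.toReal))) := by
      refine Tendsto.ennrpow_const _ (ENNReal.Tendsto.const_mul
        (ENNReal.tendsto_ofReal tendsto_id) (Or.inr ?_))
      exact ENNReal.rpow_ne_top_of_nonneg (by linarith) ENNReal.ofReal_ne_top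
    rw [ENNReal.ofReal_zero, mul_zero, ENNReal.zero_rpow_of_pos (by positivity)] at ht
    have h2 := (ht.mono_left (nhdsWithin_le_nhds (s := Set.Ioi 0))).eventually_le_const hη
    obtain ⟨δ, h3, h4⟩ := (h2.and self_mem_nhdsWithin).exists
    exact ⟨δ, h4, h3⟩
  obtain ⟨N, hN0, hN⟩ : ∃ N : ℕ, 0 < N ∧ T / N * (2 * C) ≤ δ / 2 := by
    obtain ⟨N, hN⟩ := exists_nat_gt (T * (2 * C) / (δ / 2))
    have : 0 < (N:ℝ) := lt_of_le_of_lt (by positivity) hN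
    refine ⟨N, by exact_mod_cast this, ?_⟩
    rw [div_lt_iff₀ (by positivity)] at hN
    rw [div_mul_eq_mul_div, div_le_iff₀ this]
    linarith
  have hNp : (0:ℝ) < N := by exact_mod_cast hN0
  have hcN : ∃ k, ∀ j ∈ Finset.range N, ∀ m ≥ k, ∀ n ≥ k,
      ‖(∫ s in (j * (T / N))..((j + 1 : ℕ) * (T / N)), G m s)
        - ∫ s in (j * (T / N))..((j + 1 : ℕ) * (T / N)), G n s‖ < δ / 2 / N := by
    have : ∀ j : ℕ, ∃ k, j < N → ∀ m ≥ k, ∀ n ≥ k,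
      ‖(∫ s in (j * (T / N))..((j + 1 : ℕ) * (T / N)), G m s)
        - ∫ s in (j * (T / N))..((j + 1 : ℕ) * (T / N)), G n s‖ < δ / 2 / N := by
      intro j
      by_cases hjN : j < N
      swap
      · exact ⟨0, fun h => absurd h hjN⟩
      obtain ⟨k, hk⟩ := Metric.cauchySeq_iff.1 (hcau N j hjN) (δ / 2 / N) (by positivity)
      exact ⟨k, fun _ m hm n hn => by simpa [dist_eq_norm] using hk m hm n hn⟩
    choose k hk using this
    refine ⟨(Finset.range N).sup k, fun j hj m hm n hn => ?_⟩
    have := Finset.le_sup (f := k) hj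
    exact hk j (Finset.mem_range.1 hj) m (this.trans hm) n (this.trans hn)
  obtain ⟨k₁, hk₁⟩ := hcN
  obtain ⟨k₂, hk₂⟩ := Metric.cauchySeq_iff.1 (hcau 1 0 one_pos) 1 one_pos
  refine ⟨max k₁ k₂, fun m hm n hn => ?_⟩
  have hm1 := (le_max_left _ _).trans hm
  have hm2 := (le_max_right _ _).trans hm
  have hn1 := (le_max_left _ _).trans hn
  have hn2 := (le_max_right _ _).trans hn
  have hGi : ∀ n a b, 0 ≤ a → a ≤ b → b ≤ T → IntervalIntegrable (G n) volume a b := by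
    intro n a b ha hab hb
    apply ContinuousOn.intervalIntegrable
    rw [Set.uIcc_of_le hab]
    exact (al_cont hT.le (hv n) (hG n)).mono (Set.Icc_subset_Icc ha hb)
  have hV : IntervalIntegrable (fun s => v m s - v n s) volume 0 T := (hv m).sub (hv n)
  have hD : ∀ t ∈ Set.Icc 0 T, G m t - G n t = (w m - w n) + ∫ s in (0:ℝ)..t, (v m s - v n s) := by
    intro t ht
    have hs : ∀ n, IntervalIntegrable (v n) volume 0 t := fun n => by
      apply (hv n).mono_set
      rw [Set.uIcc_of_le hT.le, Set.uIcc_of_le ht.1]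
      exact Set.Icc_subset_Icc le_rfl ht.2
    rw [intervalIntegral.integral_sub (hs m) (hs n), hG m t ht, hG n t ht]
    abel
  have hVC : ∫ s in (0:ℝ)..T, ‖v m s - v n s‖ ≤ 2 * C := by
    have := intervalIntegral.integral_mono_on hT.le hV.norm ((hv m).norm.add (hv n).norm)
      (fun s _ => norm_sub_le (v m s) (v n s))
    rw [intervalIntegral.integral_add (hv m).norm (hv n).norm] at this
    linarith [hC m, hC n]
  have hDint : Integrable (fun t => G m t - G n t) (volume.restrict (Set.Icc 0 T)) :=
    (al_cont hT.le hV hD).integrableOn_Icc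
  have hbd : ∀ t ∈ Set.Icc 0 T, ‖G m t - G n t‖ ≤ M := by
    intro t ht
    have h1 := al_cell hV hD le_rfl ht.1 ht.2 le_rfl
    have h2 := hk₂ m hm2 n hn2
    simp only [Nat.cast_zero, zero_mul, Nat.cast_one, div_one, zero_add, one_mul,
      dist_eq_norm] at h2
    rw [← intervalIntegral.integral_sub (hGi m 0 T le_rfl hT.le le_rfl)
      (hGi n 0 T le_rfl hT.le le_rfl)] at h2
    rw [sub_zero] at h1
    rw [hMdef, inv_mul_eq_div, le_div_iff₀ hT]
    have := mul_le_mul_of_nonneg_left hVC hT.le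
    linarith
  have hL1 : ∫ t in (0:ℝ)..T, ‖G m t - G n t‖ ≤ δ := by
    have h1 := al_part hT hV hD N hN0
    have h2 : (∑ j ∈ Finset.range N,
        ‖∫ s in (j * (T / N))..((j + 1 : ℕ) * (T / N)), (G m s - G n s)‖) ≤
        ∑ j ∈ Finset.range N, δ / 2 / N := by
      apply Finset.sum_le_sum
      intro j hj
      have hj' : ((j + 1 : ℕ) : ℝ) ≤ N := by exact_mod_cast Finset.mem_range.1 hj
      have ha : 0 ≤ j * (T / N) := by positivity
      have hab : (j:ℝ) * (T / N) ≤ (j + 1 : ℕ) * (T / N) := by gcongr; simp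
      have hb : ((j + 1 : ℕ) : ℝ) * (T / N) ≤ T := by
        calc ((j + 1 : ℕ) : ℝ) * (T / N) ≤ N * (T / N) := by gcongr
          _ = T := by field_simp
      rw [intervalIntegral.integral_sub (hGi m _ _ ha hab hb) (hGi n _ _ ha hab hb)]
      exact (hk₁ j hj m hm1 n hn1).le
    have h3 : ∑ j ∈ Finset.range N, δ / 2 / N = δ / 2 := by
      rw [Finset.sum_const, Finset.card_range, nsmul_eq_mul]; field_simp
    have h4 : T / N * ∫ s in (0:ℝ)..T, ‖v m s - v n s‖ ≤ T / N * (2 * C) := by gcongr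
    linarith
  refine (al_interp _ p hp1 hptop _ hDint M δ ?_ ?_).trans hδη
  · exact (ae_restrict_iff' measurableSet_Icc).2 (Eventually.of_forall hbd)
  · rwa [integral_Icc_eq_integral_Ioc, ← intervalIntegral.integral_of_le hT.le]

/-- **Aubin–Lions lemma, sequential form (Lemma 2.2(i)).** Let `X₀, X, X₁` be Banach
spaces, `i₀ : X₀ → X` a compact linear operator, `i₁ : X → X₁` an injective continuous
linear operator, `T > 0`, `1 ≤ p < ∞`, `1 ≤ q`. If `(u n)` is bounded in `L^p([0,T];X₀)`
and `i₁ ∘ i₀ ∘ u n` has a primitive representation `w n + ∫₀^t v n` with `(v n)` bounded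
in `L^q([0,T];X₁)`, then `(i₀ ∘ u n)` has a subsequence converging strongly in
`L^p([0,T];X)`. -/
theorem aubin_lions_subsequence
    {X₀ X X₁ : Type*}
    [NormedAddCommGroup X₀] [NormedSpace ℝ X₀] [CompleteSpace X₀]
    [NormedAddCommGroup X] [NormedSpace ℝ X] [CompleteSpace X]
    [NormedAddCommGroup X₁] [NormedSpace ℝ X₁] [CompleteSpace X₁]
    (i₀ : X₀ →L[ℝ] X) (hi₀ : IsCompactOperator i₀)
    (i₁ : X →L[ℝ] X₁) (hi₁ : Function.Injective i₁)
    (T : ℝ) (hT : 0 < T)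
    (p : ℝ≥0∞) (hp1 : 1 ≤ p) (hptop : p < ⊤)
    (q : ℝ≥0∞) (hq1 : 1 ≤ q)
    (u : ℕ → ℝ → X₀)
    (humeas : ∀ n, AEStronglyMeasurable (u n) (volume.restrict (Set.Icc 0 T)))
    (Cu : ℝ≥0∞) (hCu : Cu < ⊤)
    (hubnd : ∀ n, eLpNorm (u n) p (volume.restrict (Set.Icc 0 T)) ≤ Cu)
    (w : ℕ → X₁) (v : ℕ → ℝ → X₁)
    (hvint : ∀ n, IntegrableOn (v n) (Set.Icc 0 T))
    (Cv : ℝ≥0∞) (hCv : Cv < ⊤)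
    (hvbnd : ∀ n, eLpNorm (v n) q (volume.restrict (Set.Icc 0 T)) ≤ Cv)
    (hrep : ∀ n, ∀ᵐ t ∂(volume.restrict (Set.Icc 0 T)),
      i₁ (i₀ (u n t)) = w n + ∫ s in Set.Icc 0 t, v n s) :
    ∃ φ : ℕ → ℕ, StrictMono φ ∧ ∃ uLim : ℝ → X,
      Tendsto (fun k => eLpNorm (fun t => i₀ (u (φ k) t) - uLim t) p
        (volume.restrict (Set.Icc 0 T))) atTop (nhds 0) := by
  have : Fact (1 ≤ p) := ⟨hp1⟩
  set μ := volume.restrict (Set.Icc 0 T) with hμ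
  have hp0 : p ≠ 0 := (zero_lt_one.trans_le hp1).ne'
  obtain ⟨Cu₁, hCu₁, hu₁⟩ := al_L1 p hp1 u humeas Cu hCu hubnd
  obtain ⟨Cv₁, hCv₁, hv₁⟩ := al_L1 q hq1 v (fun n => (hvint n).1) Cv hCv hvbnd
  set G : ℕ → ℝ → X₁ := fun n t => w n + ∫ s in (0:ℝ)..t, v n s with hGdef
  have hGae : ∀ n, ∀ᵐ t ∂μ, i₁ (i₀ (u n t)) = G n t := by
    intro n
    filter_upwards [hrep n, ae_restrict_mem measurableSet_Icc] with t ht ht'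
    rw [ht, hGdef, integral_Icc_eq_integral_Ioc, ← intervalIntegral.integral_of_le ht'.1]
  have hvii : ∀ n, IntervalIntegrable (v n) volume 0 T := fun n =>
    (intervalIntegrable_iff_integrableOn_Icc_of_le hT.le).2 (hvint n)
  obtain ⟨K, hK, hKs⟩ := hi₀.image_closedBall_subset_compact (f := (i₀ : X₀ →ₗ[ℝ] X)) Cu₁
  -- compactness of the cell integrals
  have hcell : ∀ n (a b : ℝ), 0 ≤ a → a ≤ b → b ≤ T →
      ∫ s in a..b, G n s ∈ i₁ '' K := by
    intro n a b ha hab hb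
    have hsub : Set.Ioc a b ⊆ Set.Icc 0 T := fun x hx => ⟨ha.trans hx.1.le, hx.2.trans hb⟩
    have hui : Integrable (u n) (volume.restrict (Set.Ioc a b)) :=
      (hu₁ n).1.mono_measure (Measure.restrict_mono hsub le_rfl)
    refine ⟨i₀ (∫ s in Set.Ioc a b, u n s), hKs ⟨_, ?_, rfl⟩, ?_⟩
    · rw [mem_closedBall_zero_iff]
      refine (norm_integral_le_integral_norm _).trans (le_trans ?_ (hu₁ n).2)
      exact setIntegral_mono_set (hu₁ n).1.norm (Eventually.of_forall fun _ => norm_nonneg _)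
        (LE.le.eventuallyLE hsub)
    · rw [← i₀.integral_comp_comm hui, ← i₁.integral_comp_comm (i₀.integrable_comp hui),
        intervalIntegral.integral_of_le hab]
      apply integral_congr_ae
      exact ae_mono (Measure.restrict_mono hsub le_rfl) (hGae n)
  let B : ℕ → (ℕ × ℕ → X₁) := fun n x =>
    if x.2 < x.1 then
      ∫ s in (x.2 * (T / x.1))..((x.2 + 1 : ℕ) * (T / x.1)), G n s else i₁ 0
  have h0K : (0 : X) ∈ K := hKs ⟨0, by simp [hCu₁], by simp⟩
  have hB : ∀ n, B n ∈ Set.pi Set.univ (fun _ : ℕ × ℕ => i₁ '' K) := by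
    rintro n ⟨N, j⟩ -
    simp only [B]
    split_ifs with hj
    · have hN : (0:ℝ) < N := by exact_mod_cast (Nat.zero_le _).trans_lt hj
      have hj' : ((j + 1 : ℕ) : ℝ) ≤ N := by exact_mod_cast hj
      refine hcell n _ _ (by positivity) (by gcongr; simp) ?_
      calc ((j + 1 : ℕ) : ℝ) * (T / N) ≤ N * (T / N) := by gcongr
          _ = T := by field_simp
    · exact ⟨0, h0K, rfl⟩
  obtain ⟨a, -, φ, hφ, hlim⟩ :=
    (isCompact_univ_pi fun _ : ℕ × ℕ => hK.image i₁.continuous).tendsto_subseq hB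
  refine ⟨φ, hφ, ?_⟩
  have hcau : ∀ N j : ℕ, j < N → CauchySeq fun n =>
      ∫ s in (j * (T / N))..((j + 1 : ℕ) * (T / N)), G (φ n) s := by
    intro N j hj
    have := ((tendsto_pi_nhds.1 hlim) (N, j)).cauchySeq
    simpa [B, hj] using this
  have hGc := al_cauchy hT p hp1 hptop (fun n => w (φ n)) (fun n => v (φ n)) (fun n => G (φ n))
    (fun n => hvii _) Cv₁ hCv₁
    (fun n => by
      rw [intervalIntegral.integral_of_le hT.le, ← integral_Icc_eq_integral_Ioc]
      exact (hv₁ _).2) (fun n t _ => rfl) hcau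
  have hmem : ∀ n, MemLp (fun t => i₀ (u n t)) p μ := fun n =>
    i₀.comp_memLp' ⟨humeas n, (hubnd n).trans_lt hCu⟩
  have hcs : CauchySeq fun n => (hmem (φ n)).toLp := by
    rw [EMetric.cauchySeq_iff]
    intro e he
    by_cases hetop : e = ⊤
    · exact ⟨0, fun m _ n _ => by rw [hetop]; exact edist_lt_top _ _⟩
    obtain ⟨r, hr0, hre⟩ : ∃ r : ℝ, 0 < r ∧ ENNReal.ofReal r = e :=
      ⟨e.toReal, ENNReal.toReal_pos he.ne' hetop, ENNReal.ofReal_toReal hetop⟩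
    set c : ℝ := Cu.toReal with hc
    have hCuc : Cu = ENNReal.ofReal c := (ENNReal.ofReal_toReal hCu.ne).symm
    have hc0 : 0 ≤ c := ENNReal.toReal_nonneg
    set ε : ℝ := r / (4 * (2 * c + 1)) with hε
    have hε0 : 0 < ε := by positivity
    obtain ⟨C, hC0, hC⟩ := al_ehrling i₀ hi₀ i₁ hi₁ ε hε0
    set η : ℝ := r / (4 * (C + 1)) with hη
    have hη0 : 0 < η := by positivity
    obtain ⟨k, hk⟩ := hGc (ENNReal.ofReal η) (by simpa using hη0)
    refine ⟨k, fun m hm n hn => ?_⟩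
    rw [Lp.edist_toLp_toLp]
    set U : ℝ → X₀ := u (φ m) - u (φ n) with hU
    set D : ℝ → X₁ := fun t => G (φ m) t - G (φ n) t with hDdef
    have hUm : AEStronglyMeasurable U μ := (humeas _).sub (humeas _)
    have hDae : ∀ᵐ t ∂μ, i₁ (i₀ (U t)) = D t := by
      filter_upwards [hGae (φ m), hGae (φ n)] with t h1 h2
      simp [hU, hDdef, h1, h2]
    have hDm : AEStronglyMeasurable D μ :=
      ((i₁.comp i₀).continuous.comp_aestronglyMeasurable hUm).congr hDae
    have hUb : eLpNorm U p μ ≤ ENNReal.ofReal (2 * c) := by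
      refine (eLpNorm_sub_le (humeas _) (humeas _) hp1).trans ?_
      refine (add_le_add (hubnd _) (hubnd _)).trans ?_
      rw [hCuc, ← ENNReal.ofReal_add hc0 hc0, two_mul]
    have h1 : eLpNorm ((fun t => i₀ (u (φ m) t)) - fun t => i₀ (u (φ n) t)) p μ ≤
        eLpNorm ((fun t => ε • ‖U t‖) + fun t => C • ‖D t‖) p μ := by
      apply eLpNorm_mono_ae_real
      filter_upwards [hDae] with t ht
      have := hC (U t)
      rw [ht] at this
      simpa [hU] using this
    have h2 : eLpNorm (fun t => ε • ‖U t‖) p μ ≤ ENNReal.ofReal ε * ENNReal.ofReal (2 * c) := by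
      rw [show (fun t => ε • ‖U t‖) = ε • (fun t => ‖U t‖) from rfl, eLpNorm_const_smul,
        eLpNorm_norm, Real.enorm_eq_ofReal hε0.le]
      gcongr
    have h3 : eLpNorm (fun t => C • ‖D t‖) p μ ≤ ENNReal.ofReal C * ENNReal.ofReal η := by
      rw [show (fun t => C • ‖D t‖) = C • (fun t => ‖D t‖) from rfl, eLpNorm_const_smul,
        eLpNorm_norm, Real.enorm_eq_ofReal hC0]
      gcongr
      exact hk m hm n hn
    have h4 := eLpNorm_add_le (μ := μ) (p := p) (hUm.norm.const_smul ε) (hDm.norm.const_smul C) hp1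
    refine (h1.trans (h4.trans (add_le_add h2 h3))).trans_lt ?_
    rw [← ENNReal.ofReal_mul hε0.le, ← ENNReal.ofReal_mul hC0,
      ← ENNReal.ofReal_add (by positivity) (by positivity), ← hre,
      ENNReal.ofReal_lt_ofReal_iff hr0]
    have e1 : ε * (2 * c) ≤ r / 4 := by
      rw [hε, div_mul_eq_mul_div, div_le_div_iff₀ (by positivity) (by positivity)]
      nlinarith
    have e2 : C * η ≤ r / 4 := by
      rw [hη, ← mul_div_assoc, div_le_div_iff₀ (by positivity) (by positivity)]
      nlinarith
    linarith
  obtain ⟨L, hL⟩ := cauchySeq_tendsto_of_complete hcs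
  refine ⟨L, ?_⟩
  have := (Lp.tendsto_Lp_iff_tendsto_eLpNorm' _ _).1 hL
  refine this.congr fun n => eLpNorm_congr_ae ?_
  filter_upwards [(hmem (φ n)).coeFn_toLp] with t ht
  simp [ht]
end

section
/- Let V be a finite-dimensional subspace of L²(𝕋³; ℝ³) each of whose elements is (almost everywhere equal to) an essentially bounded function. Then there exists a constant C > 0, depending only on V, with the following property: for every c > 0, every ρ₁, ρ₂ ∈ L¹(𝕋³) with ρ₁ ≥ c and ρ₂ ≥ c almost everywhere, every linear functional ℓ : V → ℝ, and every u₁, u₂ ∈ V satisfying ∫_{𝕋³} ρ_i u_i·v dx = ℓ(v) for all v ∈ V (i = 1,2), one has ‖u₁ − u₂‖_{L²(𝕋³)} ≤ C c^{−2} ‖ρ₁ − ρ₂‖_{L¹(𝕋³)} ‖ℓ‖, where ‖ℓ‖ = sup{|ℓ(v)| : v ∈ V, ‖v‖_{L²(𝕋³)} ≤ 1}. -/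
open MeasureTheory
open scoped ENNReal RealInnerProductSpace

/-- The three-dimensional torus `𝕋³`, with its Haar (Lebesgue) measure. -/
abbrev Torus3 : Type := AddCircle (1:ℝ) × AddCircle (1:ℝ) × AddCircle (1:ℝ)

/-- Elements of a finite-dimensional space of bounded functions: uniform sup bound. -/
lemma galerkin_sup_bound {α E : Type*} [MeasurableSpace α] [NormedAddCommGroup E]
    [InnerProductSpace ℝ E] {μ : Measure α}
    (V : Submodule ℝ (Lp E 2 μ)) [FiniteDimensional ℝ V]
    (hbdd : ∀ u ∈ V, eLpNorm (⇑u) ⊤ μ < ⊤) :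
    ∃ K > (0:ℝ), ∀ u : V, ∀ᵐ x ∂μ, ‖(u : Lp E 2 μ) x‖ ≤ K * ‖u‖ := by
  have hm : ∀ u : V, MemLp (⇑(u : Lp E 2 μ)) ⊤ μ := fun u =>
    ⟨Lp.aestronglyMeasurable _, hbdd u u.2⟩
  let T : V →ₗ[ℝ] Lp E ⊤ μ :=
    { toFun := fun u => (hm u).toLp _
      map_add' := by
        intro u v
        rw [← MemLp.toLp_add]
        exact MemLp.toLp_congr _ _ (Lp.coeFn_add (u : Lp E 2 μ) v)
      map_smul' := by
        intro a u
        rw [RingHom.id_apply, ← MemLp.toLp_const_smul]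
        exact MemLp.toLp_congr _ _ (Lp.coeFn_smul a (u : Lp E 2 μ)) }
  let S := LinearMap.toContinuousLinearMap T
  refine ⟨‖S‖ + 1, by positivity, fun u => ?_⟩
  have h1 : ‖T u‖ ≤ ‖S‖ * ‖u‖ := S.le_opNorm u
  have h2 : ∀ᵐ x ∂μ, ‖(T u) x‖ ≤ ‖T u‖ := by
    have h3 := ae_le_eLpNormEssSup (f := ⇑(T u)) (μ := μ)
    filter_upwards [h3] with x hx
    rw [Lp.norm_def, eLpNorm_exponent_top]
    have h4 : eLpNormEssSup (⇑(T u)) μ ≠ ⊤ := by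
      rw [← eLpNorm_exponent_top]
      exact Lp.eLpNorm_ne_top _
    have := ENNReal.toReal_mono h4 hx
    simpa using this
  filter_upwards [h2, (hm u).coeFn_toLp] with x hx hx'
  have h5 : (T u) x = (u : Lp E 2 μ) x := hx'
  rw [h5] at hx
  nlinarith [norm_nonneg u]

lemma galerkin_integrable {α E : Type*} [MeasurableSpace α] [NormedAddCommGroup E]
    [InnerProductSpace ℝ E] {μ : Measure α}
    {ρ : α → ℝ} (hρ : Integrable ρ μ) {u v : Lp E 2 μ} {A B : ℝ}
    (hu : ∀ᵐ x ∂μ, ‖u x‖ ≤ A) (hv : ∀ᵐ x ∂μ, ‖v x‖ ≤ B) :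
    Integrable (fun x => ρ x * ⟪u x, v x⟫) μ := by
  refine hρ.mul_bdd (c := A * B)
    ((Lp.aestronglyMeasurable u).inner (Lp.aestronglyMeasurable v)) ?_
  filter_upwards [hu, hv] with x h1 h2
  calc ‖(⟪u x, v x⟫ : ℝ)‖ ≤ ‖u x‖ * ‖v x‖ := norm_inner_le_norm _ _
    _ ≤ A * B := mul_le_mul h1 h2 (norm_nonneg _) ((norm_nonneg _).trans h1)

lemma galerkin_coercive {α E : Type*} [MeasurableSpace α] [NormedAddCommGroup E]
    [InnerProductSpace ℝ E] {μ : Measure α}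
    {ρ : α → ℝ} (hρ : Integrable ρ μ) {c : ℝ} (hc : ∀ᵐ x ∂μ, c ≤ ρ x) {u : Lp E 2 μ} {A : ℝ}
    (hu : ∀ᵐ x ∂μ, ‖u x‖ ≤ A) :
    c * ‖u‖ ^ 2 ≤ ∫ x, ρ x * ⟪u x, u x⟫ ∂μ := by
  rw [← real_inner_self_eq_norm_sq, L2.inner_def, ← integral_const_mul]
  refine integral_mono_ae ((L2.integrable_inner u u).const_mul c)
    (galerkin_integrable hρ hu hu) ?_
  filter_upwards [hc] with x hx
  exact mul_le_mul_of_nonneg_right hx real_inner_self_nonneg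

/-- **Lipschitz continuity of the inverse Galerkin mass operator
(`‖M⁻¹[ρ₁] − M⁻¹[ρ₂]‖ ≤ C c⁻² ‖ρ₁ − ρ₂‖_{L¹}`).** Let `V` be a finite-dimensional
subspace of `L²(𝕋³;ℝ³)` whose elements are essentially bounded. Then there is `C > 0`,
depending only on `V`, such that whenever `c > 0`, `ρ₁, ρ₂ ∈ L¹(𝕋³)` with `ρᵢ ≥ c` a.e.,
`ℓ` is a linear functional on `V`, and `u₁, u₂ ∈ V` satisfy `∫ ρᵢ uᵢ·v = ℓ(v)` for all
`v ∈ V`, one has `‖u₁ − u₂‖_{L²} ≤ C c⁻² ‖ρ₁ − ρ₂‖_{L¹} ‖ℓ‖`. -/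
theorem galerkin_mass_operator_inverse_lipschitz
    (V : Submodule ℝ (Lp (EuclideanSpace ℝ (Fin 3)) 2 (volume : Measure Torus3)))
    [FiniteDimensional ℝ V]
    (hbdd : ∀ u ∈ V, eLpNorm (⇑u) ⊤ (volume : Measure Torus3) < ⊤) :
    ∃ C > (0:ℝ), ∀ c > (0:ℝ), ∀ ρ₁ ρ₂ : Torus3 → ℝ,
      Integrable ρ₁ → Integrable ρ₂ →
      (∀ᵐ x ∂(volume : Measure Torus3), c ≤ ρ₁ x) →
      (∀ᵐ x ∂(volume : Measure Torus3), c ≤ ρ₂ x) →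
      ∀ ℓ : V →L[ℝ] ℝ, ∀ u₁ u₂ : V,
      (∀ v : V,
        (∫ x, ρ₁ x * ⟪(u₁ : Lp (EuclideanSpace ℝ (Fin 3)) 2 (volume : Measure Torus3)) x,
          (v : Lp (EuclideanSpace ℝ (Fin 3)) 2 (volume : Measure Torus3)) x⟫) = ℓ v) →
      (∀ v : V,
        (∫ x, ρ₂ x * ⟪(u₂ : Lp (EuclideanSpace ℝ (Fin 3)) 2 (volume : Measure Torus3)) x,
          (v : Lp (EuclideanSpace ℝ (Fin 3)) 2 (volume : Measure Torus3)) x⟫) = ℓ v) →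
      ‖u₁ - u₂‖ ≤ C * c⁻¹ ^ 2 * (∫ x, |ρ₁ x - ρ₂ x|) * ‖ℓ‖ := by
  obtain ⟨K, hK, hKb⟩ := galerkin_sup_bound V hbdd
  refine ⟨K ^ 2, by positivity, ?_⟩
  intro c hc ρ₁ ρ₂ hi₁ hi₂ hρ₁ hρ₂ ℓ u₁ u₂ h₁ h₂
  set w : V := u₁ - u₂ with hw
  set D : ℝ := ∫ x, |ρ₁ x - ρ₂ x| with hD
  have hD0 : 0 ≤ D := integral_nonneg fun x => abs_nonneg _
  have e2 : c * ‖u₂‖ ≤ ‖ℓ‖ := by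
    have a1 := galerkin_coercive hi₂ hρ₂ (hKb u₂)
    rw [h₂ u₂] at a1
    have a2 : ℓ u₂ ≤ ‖ℓ‖ * ‖u₂‖ := (le_abs_self _).trans (ℓ.le_opNorm u₂)
    have a3 : c * ‖u₂‖ ^ 2 ≤ ‖ℓ‖ * ‖u₂‖ := a1.trans a2
    rcases (norm_nonneg u₂).eq_or_lt with h0 | h0
    · rw [← h0, mul_zero]; exact norm_nonneg ℓ
    · refine le_of_mul_le_mul_right ?_ h0
      calc c * ‖u₂‖ * ‖u₂‖ = c * ‖u₂‖ ^ 2 := by ring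
        _ ≤ _ := a3
  have e1 : c * ‖w‖ ^ 2 ≤ K ^ 2 * ‖u₂‖ * ‖w‖ * D := by
    have a1 := galerkin_coercive hi₁ hρ₁ (hKb w)
    have i1 := galerkin_integrable hi₁ (hKb u₁) (hKb w)
    have i2 := galerkin_integrable hi₁ (hKb u₂) (hKb w)
    have i3 := galerkin_integrable hi₂ (hKb u₂) (hKb w)
    have a2 := integral_sub i1 i2
    have a3 := integral_sub i3 i2
    have a4 := Lp.coeFn_sub (u₁ : Lp (EuclideanSpace ℝ (Fin 3)) 2 (volume : Measure Torus3)) u₂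
    have a5 : (∫ x, ρ₁ x * ⟪(w : Lp (EuclideanSpace ℝ (Fin 3)) 2 (volume : Measure Torus3)) x,
          (w : Lp (EuclideanSpace ℝ (Fin 3)) 2 (volume : Measure Torus3)) x⟫) =
        ∫ x, (ρ₁ x * ⟪(u₁ : Lp (EuclideanSpace ℝ (Fin 3)) 2 (volume : Measure Torus3)) x,
          (w : Lp (EuclideanSpace ℝ (Fin 3)) 2 (volume : Measure Torus3)) x⟫ -
          ρ₁ x * ⟪(u₂ : Lp (EuclideanSpace ℝ (Fin 3)) 2 (volume : Measure Torus3)) x,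
          (w : Lp (EuclideanSpace ℝ (Fin 3)) 2 (volume : Measure Torus3)) x⟫) := by
      refine integral_congr_ae ?_
      filter_upwards [a4] with x hx
      have hx' : (w : Lp (EuclideanSpace ℝ (Fin 3)) 2 (volume : Measure Torus3)) x =
        (u₁ : Lp (EuclideanSpace ℝ (Fin 3)) 2 (volume : Measure Torus3)) x -
        (u₂ : Lp (EuclideanSpace ℝ (Fin 3)) 2 (volume : Measure Torus3)) x := hx
      rw [← mul_sub, ← inner_sub_left, ← hx']
    rw [a5, a2, h₁ w, ← h₂ w, ← a3] at a1
    refine a1.trans ?_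
    rw [hD, ← integral_const_mul]
    refine integral_mono_ae (i3.sub i2) ((hi₁.sub hi₂).abs.const_mul _) ?_
    filter_upwards [hKb u₂, hKb w] with x b1 b2
    rw [← sub_mul]
    refine (le_abs_self _).trans ?_
    rw [abs_mul, abs_sub_comm, mul_comm]
    refine mul_le_mul_of_nonneg_right ?_ (abs_nonneg _)
    refine (abs_real_inner_le_norm _ _).trans ?_
    refine (mul_le_mul b1 b2 (norm_nonneg _) (by positivity)).trans (le_of_eq (by ring))
  have e3 : c * ‖w‖ ≤ K ^ 2 * ‖u₂‖ * D := by
    rcases (norm_nonneg w).eq_or_lt with h0 | h0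
    · rw [← h0, mul_zero]; positivity
    · refine le_of_mul_le_mul_right ?_ h0
      calc c * ‖w‖ * ‖w‖ = c * ‖w‖ ^ 2 := by ring
        _ ≤ _ := e1
        _ = _ := by ring
  have e4 : c ^ 2 * ‖w‖ ≤ K ^ 2 * D * ‖ℓ‖ := by
    calc c ^ 2 * ‖w‖ = c * (c * ‖w‖) := by ring
      _ ≤ c * (K ^ 2 * ‖u₂‖ * D) := by gcongr
      _ = K ^ 2 * D * (c * ‖u₂‖) := by ring
      _ ≤ _ := by gcongr
  calc ‖w‖ = c⁻¹ ^ 2 * (c ^ 2 * ‖w‖) := by field_simp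
    _ ≤ c⁻¹ ^ 2 * (K ^ 2 * D * ‖ℓ‖) := by gcongr
    _ = _ := by ring
end

section
/- Let (X, μ) be a measure space, and let ρ_n, ρ : X → [0,∞) and u_n, u : X → ℝ³ be measurable. Suppose (i) sup_n ∫_X ρ_n |u_n|³ dμ < ∞ and ∫_X ρ |u|³ dμ < ∞, and (ii) for every M > 0 the truncated functions √ρ_n u_n 𝟙_{{|u_n| ≤ M}} converge to √ρ u 𝟙_{{|u| ≤ M}} strongly in L²(X, μ; ℝ³) as n → ∞. Then √ρ_n u_n converges to √ρ u strongly in L²(X, μ; ℝ³). -/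
open MeasureTheory Filter
open scoped ENNReal

/-- Bound for the `L²` norm of the part of `√r v` where `|v| > M`. -/
theorem tail_bound_aux {X : Type*} [MeasurableSpace X] (μ : Measure X)
    (r : X → ℝ) (v : X → EuclideanSpace ℝ (Fin 3)) (hr : ∀ x, 0 ≤ r x)
    (K : ℝ≥0∞) (hK : ∫⁻ x, ENNReal.ofReal (r x * ‖v x‖ ^ 3) ∂μ ≤ K) (M : ℝ) (hM : 0 < M) :
    eLpNorm ({y | ‖v y‖ ≤ M}ᶜ.indicator (fun y => Real.sqrt (r y) • v y)) 2 μ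
      ≤ (ENNReal.ofReal M⁻¹ * K) ^ (1 / 2 : ℝ) := by
  rw [eLpNorm_eq_lintegral_rpow_enorm_toReal (by norm_num) (by norm_num)]
  simp only [ENNReal.toReal_ofNat]
  refine ENNReal.rpow_le_rpow ?_ (by norm_num)
  refine le_trans ?_ (mul_le_mul_right hK _)
  rw [← lintegral_const_mul' _ _ ENNReal.ofReal_ne_top]
  refine lintegral_mono fun x => ?_
  by_cases hx : ‖v x‖ ≤ M
  · rw [Set.indicator_of_notMem (by simpa using hx)]
    simp
  · rw [Set.indicator_of_mem (by simpa using hx)]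
    push Not at hx
    rw [← ENNReal.ofReal_mul (by positivity), ← ofReal_norm_eq_enorm,
      ENNReal.ofReal_rpow_of_nonneg (norm_nonneg _) (by norm_num)]
    refine ENNReal.ofReal_le_ofReal ?_
    rw [Real.rpow_two, norm_smul, mul_pow, Real.norm_eq_abs, sq_abs, Real.sq_sqrt (hr x),
      inv_mul_eq_div, le_div_iff₀ hM]
    have h1 : 0 ≤ r x * ‖v x‖ ^ 2 := mul_nonneg (hr x) (by positivity)
    nlinarith [mul_le_mul_of_nonneg_left hx.le h1]

/-- **Truncation argument in Lemma 6.4.** Let `(X, μ)` be a measure space and let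
`ρ n, ρ ≥ 0` and `u n, u : X → ℝ³` be measurable. If `∫ ρ n |u n|³ dμ` is uniformly
bounded and `∫ ρ |u|³ dμ < ∞`, and if for every `M > 0` the truncations
`√(ρ n) u n 𝟙_{|u n| ≤ M}` converge to `√ρ u 𝟙_{|u| ≤ M}` strongly in `L²(X,μ;ℝ³)`,
then `√(ρ n) u n → √ρ u` strongly in `L²(X,μ;ℝ³)`. -/
theorem sqrt_momentum_strong_L2_of_truncations
    {X : Type*} [MeasurableSpace X] (μ : Measure X)
    (ρn : ℕ → X → ℝ) (ρ : X → ℝ)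
    (un : ℕ → X → EuclideanSpace ℝ (Fin 3)) (u : X → EuclideanSpace ℝ (Fin 3))
    (hρn : ∀ n, Measurable (ρn n)) (hρ : Measurable ρ)
    (hun : ∀ n, Measurable (un n)) (hu : Measurable u)
    (hρnnn : ∀ n x, 0 ≤ ρn n x) (hρnn : ∀ x, 0 ≤ ρ x)
    (C : ℝ≥0∞) (hC : C < ⊤)
    (hbnd : ∀ n, ∫⁻ x, ENNReal.ofReal (ρn n x * ‖un n x‖ ^ 3) ∂μ ≤ C)
    (hbnd' : ∫⁻ x, ENNReal.ofReal (ρ x * ‖u x‖ ^ 3) ∂μ < ⊤)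
    (htrunc : ∀ M > (0:ℝ), Tendsto (fun n =>
      eLpNorm (fun x =>
          ({y | ‖un n y‖ ≤ M}.indicator (fun y => Real.sqrt (ρn n y) • un n y) x)
            - ({y | ‖u y‖ ≤ M}.indicator (fun y => Real.sqrt (ρ y) • u y) x)) 2 μ)
      atTop (nhds 0)) :
    Tendsto (fun n => eLpNorm
        (fun x => Real.sqrt (ρn n x) • un n x - Real.sqrt (ρ x) • u x) 2 μ)
      atTop (nhds 0) := by
  set K : ℝ≥0∞ := max C (∫⁻ x, ENNReal.ofReal (ρ x * ‖u x‖ ^ 3) ∂μ) with hKdef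
  have hK : K ≠ ⊤ := (max_lt hC hbnd').ne
  have hg : Tendsto (fun M : ℝ => (ENNReal.ofReal M⁻¹ * K) ^ (1 / 2 : ℝ)
      + (ENNReal.ofReal M⁻¹ * K) ^ (1 / 2 : ℝ)) atTop (nhds 0) := by
    have h1 : Tendsto (fun M : ℝ => ENNReal.ofReal M⁻¹) atTop (nhds 0) := by
      simpa using ENNReal.tendsto_ofReal (tendsto_inv_atTop_zero (𝕜 := ℝ))
    have h2 : Tendsto (fun M : ℝ => ENNReal.ofReal M⁻¹ * K) atTop (nhds 0) := by
      simpa using ENNReal.Tendsto.mul_const h1 (Or.inr hK)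
    have h3 := h2.ennrpow_const (1 / 2 : ℝ)
    rw [ENNReal.zero_rpow_of_pos (by norm_num)] at h3
    simpa using h3.add h3
  rw [ENNReal.tendsto_nhds_zero]
  intro ε hε
  have hε2 : 0 < ε / 2 := ENNReal.half_pos hε.ne'
  obtain ⟨M, hMε, hM⟩ :=
    ((ENNReal.tendsto_nhds_zero.1 hg (ε / 2) hε2).and (eventually_gt_atTop 0)).exists
  filter_upwards [ENNReal.tendsto_nhds_zero.1 (htrunc M hM) (ε / 2) hε2] with n hn
  have hf : Measurable (fun y => Real.sqrt (ρn n y) • un n y) := (hρn n).sqrt.smul (hun n)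
  have hf' : Measurable (fun y => Real.sqrt (ρ y) • u y) := hρ.sqrt.smul hu
  have hs : MeasurableSet {y | ‖un n y‖ ≤ M} := measurableSet_le (hun n).norm measurable_const
  have hs' : MeasurableSet {y | ‖u y‖ ≤ M} := measurableSet_le hu.norm measurable_const
  have t1 := tail_bound_aux μ (ρn n) (un n) (hρnnn n) K ((hbnd n).trans (le_max_left _ _)) M hM
  have t2 := tail_bound_aux μ ρ u hρnn K (le_max_right _ _) M hM
  have heq : (fun x => Real.sqrt (ρn n x) • un n x - Real.sqrt (ρ x) • u x)
      = (fun x =>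
          ({y | ‖un n y‖ ≤ M}.indicator (fun y => Real.sqrt (ρn n y) • un n y) x)
            - ({y | ‖u y‖ ≤ M}.indicator (fun y => Real.sqrt (ρ y) • u y) x))
        + ({y | ‖un n y‖ ≤ M}ᶜ.indicator (fun y => Real.sqrt (ρn n y) • un n y)
          - {y | ‖u y‖ ≤ M}ᶜ.indicator (fun y => Real.sqrt (ρ y) • u y)) := by
    funext x
    have e1 := Set.indicator_self_add_compl_apply {y | ‖un n y‖ ≤ M}
      (fun y => Real.sqrt (ρn n y) • un n y) x
    have e2 := Set.indicator_self_add_compl_apply {y | ‖u y‖ ≤ M}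
      (fun y => Real.sqrt (ρ y) • u y) x
    simp only [Pi.add_apply, Pi.sub_apply]
    rw [← e1, ← e2]
    abel
  rw [heq]
  have m1 := (hf.indicator hs.compl).aestronglyMeasurable (μ := μ)
  have m2 := (hf'.indicator hs'.compl).aestronglyMeasurable (μ := μ)
  have m3 := ((hf.indicator hs).sub (hf'.indicator hs')).aestronglyMeasurable (μ := μ)
  calc _ ≤ _ := eLpNorm_add_le m3 (m1.sub m2) (by norm_num)
    _ ≤ ε / 2 + ε / 2 := by
      refine add_le_add hn ?_
      exact (eLpNorm_sub_le m1 m2 (by norm_num)).trans ((add_le_add t1 t2).trans hMε)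
    _ = ε := ENNReal.add_halves ε
end
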